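/- The 16 maps of the standard basis span the Hermitian-preserving maps: every Hermitian-preserving ℂ-linear map L : M_2(ℂ) → M_2(ℂ) (i.e. satisfying L(ρ†) = L(ρ)† for all ρ) can be written as L = Σ_{M} c_M B_M with real coefficients c_M ∈ ℝ, where B_M(ρ) := M ρ M† and M ranges over the set {I, X, Y, Z, (I+iX)/√2, (I+iY)/√2, (I+iZ)/√2, (Y+Z)/√2, (Z+X)/√2, (X+Y)/√2, (I+X)/2, (I+Y)/2, (I+Z)/2, (Y+iZ)/2, (Z+iX)/2, (X+iY)/2}. -/

import Mathlib

open Matrix Complex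

/-- The Pauli matrix `X`. -/
def pauliX : Matrix (Fin 2) (Fin 2) ℂ := !![0, 1; 1, 0]

/-- The Pauli matrix `Y`. -/
def pauliY : Matrix (Fin 2) (Fin 2) ℂ := !![0, -Complex.I; Complex.I, 0]

/-- The Pauli matrix `Z`. -/
def pauliZ : Matrix (Fin 2) (Fin 2) ℂ := !![1, 0; 0, -1]

/-- The 16 matrices defining the standard basis operations:
`I, X, Y, Z, (I+iX)/√2, (I+iY)/√2, (I+iZ)/√2, (Y+Z)/√2, (Z+X)/√2, (X+Y)/√2,
(I+X)/2, (I+Y)/2, (I+Z)/2, (Y+iZ)/2, (Z+iX)/2, (X+iY)/2`. -/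
noncomputable def stdBasisMats : Fin 16 → Matrix (Fin 2) (Fin 2) ℂ :=
  ![1, pauliX, pauliY, pauliZ,
    ((Real.sqrt 2 : ℂ))⁻¹ • (1 + Complex.I • pauliX),
    ((Real.sqrt 2 : ℂ))⁻¹ • (1 + Complex.I • pauliY),
    ((Real.sqrt 2 : ℂ))⁻¹ • (1 + Complex.I • pauliZ),
    ((Real.sqrt 2 : ℂ))⁻¹ • (pauliY + pauliZ),
    ((Real.sqrt 2 : ℂ))⁻¹ • (pauliZ + pauliX),
    ((Real.sqrt 2 : ℂ))⁻¹ • (pauliX + pauliY),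
    (2 : ℂ)⁻¹ • (1 + pauliX),
    (2 : ℂ)⁻¹ • (1 + pauliY),
    (2 : ℂ)⁻¹ • (1 + pauliZ),
    (2 : ℂ)⁻¹ • (pauliY + Complex.I • pauliZ),
    (2 : ℂ)⁻¹ • (pauliZ + Complex.I • pauliX),
    (2 : ℂ)⁻¹ • (pauliX + Complex.I • pauliY)]

/-- The `ℂ`-linear conjugation map `B_M : ρ ↦ M ρ M†`. -/
noncomputable def conjugationMap (M : Matrix (Fin 2) (Fin 2) ℂ) :
    Matrix (Fin 2) (Fin 2) ℂ →ₗ[ℂ] Matrix (Fin 2) (Fin 2) ℂ :=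
  (LinearMap.mulRight ℂ Mᴴ).comp (LinearMap.mulLeft ℂ M)


/-- Scaling `M` by a real number `r` scales `B_M` by `r ^ 2`. -/
theorem conjugationMap_ofReal_smul (r : ℝ) (M : Matrix (Fin 2) (Fin 2) ℂ) :
    conjugationMap ((r : ℂ) • M) = (r ^ 2) • conjugationMap M := by
  ext ρ : 1
  simp [conjugationMap, smul_smul, ← Complex.coe_smul, pow_two]

theorem conjugationMap_inv_sqrt_two_smul (M : Matrix (Fin 2) (Fin 2) ℂ) :
    conjugationMap ((Real.sqrt 2 : ℂ)⁻¹ • M) = (2⁻¹ : ℝ) • conjugationMap M := by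
  rw [← Complex.ofReal_inv, conjugationMap_ofReal_smul, inv_pow, Real.sq_sqrt zero_le_two]

theorem conjugationMap_inv_two_smul (M : Matrix (Fin 2) (Fin 2) ℂ) :
    conjugationMap ((2 : ℂ)⁻¹ • M) = (4⁻¹ : ℝ) • conjugationMap M := by
  have h := conjugationMap_ofReal_smul 2⁻¹ M
  norm_num at h ⊢
  exact h

theorem conjugationMap_single_apply (M : Matrix (Fin 2) (Fin 2) ℂ) (i j k l : Fin 2) :
    conjugationMap M (single i j 1) k l = M k i * star (M l j) := by
  simp [conjugationMap, Matrix.mul_apply, Matrix.single_apply, ite_and]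

/-- The process-matrix coefficient of `L` at the pair of Pauli matrices `A`, `B`:
the coefficient of `ρ ↦ A ρ B` in `L`. -/
noncomputable def processCoeff (L : Matrix (Fin 2) (Fin 2) ℂ →ₗ[ℂ] Matrix (Fin 2) (Fin 2) ℂ)
    (A B : Matrix (Fin 2) (Fin 2) ℂ) : ℂ :=
  (4⁻¹ : ℝ) • ∑ i, ∑ j, (A * L (single i j 1) * B) i j

/-- The coefficients of a Hermitian-preserving map in the standard basis. -/
noncomputable def stdBasisCoeff (L : Matrix (Fin 2) (Fin 2) ℂ →ₗ[ℂ] Matrix (Fin 2) (Fin 2) ℂ) :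
    Fin 16 → ℝ :=
  let p := processCoeff L
  let re := fun A B => (p A B).re
  let im := fun A B => (p A B).im
  ![re 1 1 - (re 1 pauliX + re 1 pauliY + re 1 pauliZ)
      + (im 1 pauliX + im 1 pauliY + im 1 pauliZ),
    re pauliX pauliX - (re 1 pauliX + re pauliZ pauliX + re pauliX pauliY)
      + (im 1 pauliX + im pauliZ pauliX + im pauliX pauliY),
    re pauliY pauliY - (re 1 pauliY + re pauliY pauliZ + re pauliX pauliY)
      + (im 1 pauliY + im pauliY pauliZ + im pauliX pauliY),
    re pauliZ pauliZ - (re 1 pauliZ + re pauliY pauliZ + re pauliZ pauliX)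
      + (im 1 pauliZ + im pauliY pauliZ + im pauliZ pauliX),
    -2 * im 1 pauliX, -2 * im 1 pauliY, -2 * im 1 pauliZ,
    2 * re pauliY pauliZ, 2 * re pauliZ pauliX, 2 * re pauliX pauliY,
    4 * re 1 pauliX, 4 * re 1 pauliY, 4 * re 1 pauliZ,
    -4 * im pauliY pauliZ, -4 * im pauliZ pauliX, -4 * im pauliX pauliY]

set_option maxHeartbeats 4000000 in
/-- **The standard basis spans the Hermitian-preserving maps.** Every
Hermitian-preserving `ℂ`-linear map `L : M_2(ℂ) → M_2(ℂ)` is a real linear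
combination `L = ∑_M c_M B_M` of the 16 standard basis operations
`B_M(ρ) = M ρ M†`. -/
theorem stdBasis_spans_hermitianPreserving
    (L : Matrix (Fin 2) (Fin 2) ℂ →ₗ[ℂ] Matrix (Fin 2) (Fin 2) ℂ)
    (hL : ∀ ρ : Matrix (Fin 2) (Fin 2) ℂ, L ρᴴ = (L ρ)ᴴ) :
    ∃ c : Fin 16 → ℝ, L = ∑ i : Fin 16, c i • conjugationMap (stdBasisMats i) := by
  refine ⟨stdBasisCoeff L, ?_⟩
  have hconj (i j k l : Fin 2) : L (single j i 1) k l = star (L (single i j 1) l k) := by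
    rw [← conjTranspose_apply, ← hL, conjTranspose_single, star_one]
  have h00 := hconj 0 0
  have h10 := hconj 0 1
  have h11 := hconj 1 1
  simp only [Fin.forall_fin_two, Complex.ext_iff, Complex.star_def, Complex.conj_re,
    Complex.conj_im] at h00 h10 h11
  refine Matrix.ext_linearMap (R := ℂ) fun i j => LinearMap.ext_ring (Matrix.ext fun k l => ?_)
  simp only [Fin.sum_univ_succ, stdBasisCoeff, stdBasisMats, Fin.sum_univ_zero, add_zero,
    Matrix.cons_val_zero, Matrix.cons_val_succ, conjugationMap_inv_sqrt_two_smul,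
    conjugationMap_inv_two_smul, LinearMap.comp_apply, singleLinearMap_apply,
    LinearMap.add_apply, LinearMap.smul_apply, Matrix.add_apply, Matrix.smul_apply,
    conjugationMap_single_apply]
  simp only [processCoeff, Matrix.mul_apply, Fin.sum_univ_two]
  simp [pauliX, pauliY, pauliZ]
  fin_cases i <;> fin_cases j <;> fin_cases k <;> fin_cases l <;> apply Complex.ext <;>
  simp <;>
  linarith
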